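/- Let a ≥ 4 and let d be a positive integer with ⌈d/a⌉ = 31 or ⌈d/a⌉ ≥ 63, and with h_d^{(a)} ≤ 3. If d ≢ −3 (mod a), then for all n ≥ 1, q_d^{(a)}(n) ≥ Q_d^{(a,-)}(n). If d ≡ −3 (mod a), then q_d^{(a)}(n) ≥ Q_d^{(a,-)}(n) for all n ≥ 1 with n ≠ d + 3 + a. -/

import Mathlib

/-- `q_d^{(a)}(n)`: the number of partitions of `n` into parts of size at least `a`
such that successive parts differ by at least `d`. -/
noncomputable def gapCount (d a n : ℕ) : ℕ :=
  Nat.card {p : n.Partition //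
    (∀ x ∈ p.parts, a ≤ x) ∧
    List.Chain' (fun x y => x + d ≤ y) (p.parts.sort (· ≤ ·))}

/-- `Q_d^{(a)}(n)`: the number of partitions of `n` into parts congruent to `a` or `-a`
modulo `d + 3`. -/
noncomputable def congCount (d a n : ℕ) : ℕ :=
  Nat.card {p : n.Partition //
    ∀ x ∈ p.parts, x ≡ a [MOD d + 3] ∨ x + a ≡ 0 [MOD d + 3]}

/-- `Q_d^{(a,-)}(n)`: as `congCount`, but no part equals `d + 3 - a`. -/
noncomputable def congMinusCount (d a n : ℕ) : ℕ :=
  Nat.card {p : n.Partition //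
    (∀ x ∈ p.parts, x ≡ a [MOD d + 3] ∨ x + a ≡ 0 [MOD d + 3]) ∧
    ∀ x ∈ p.parts, x ≠ d + 3 - a}

/-- `Q_d^{(a,-,-)}(n)`: as `congCount`, but no part equals `a` or `d + 3 - a`. -/
noncomputable def congMinusMinusCount (d a n : ℕ) : ℕ :=
  Nat.card {p : n.Partition //
    (∀ x ∈ p.parts, x ≡ a [MOD d + 3] ∨ x + a ≡ 0 [MOD d + 3]) ∧
    (∀ x ∈ p.parts, x ≠ a) ∧ ∀ x ∈ p.parts, x ≠ d + 3 - a}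

/-- `ρ(R; n)`: the number of partitions of `n` all of whose parts lie in `R`. -/
noncomputable def rhoCount (R : Set ℕ) (n : ℕ) : ℕ :=
  Nat.card {p : n.Partition // ∀ x ∈ p.parts, x ∈ R}

/-- `h_n^{(a)}`: the least nonnegative residue of `-n` modulo `a`,
so that `n + negRes n a = a * ⌈n/a⌉`. -/
def negRes (n a : ℕ) : ℕ := (a - n % a) % a

/-- `⌈d/a⌉` for natural numbers. -/
def cdiv (d a : ℕ) : ℕ := (d + a - 1) / a

/-!
Write `D = d + 3`. Replacing every part `x ≠ a` by `⌊2 x / D⌋` and filling up with ones is injective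
on the partitions counted by `congMinusCount`, so there are at most `p(w)` of them, where `p` counts
all partitions and `w = ⌊2 n / D⌋`. On the other side, adding the sorted solutions of
`x 0 + ⋯ + x k = N` to `a, a + d, …, a + k d` yields at least
`(N + k).choose k / (k + 1)! ≥ (N + 1) ^ k / ((k + 1)! k !)` partitions counted by `gapCount`, where
`N` is the excess of `n` over the sum of that progression. Taking `k` close to `√(w / 2)`, this
exceeds `p(w)`: for `w ≤ 18` it is compared with `p(w) ≤ 2 ^ (w - 1)`, and for larger `w` with
`(r + 1) p(w) ≤ exp (π² r / 6 + w / r)`, a saddle point bound for the generating function of `p`.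
-/

lemma partition_ext_of_filter_ne {n a : ℕ} {p q : n.Partition} (ha : 0 < a)
    (h : p.parts.filter (· ≠ a) = q.parts.filter (· ≠ a)) : p = q := by
  have parts_eq (p : n.Partition) :
      p.parts = Multiset.replicate (p.parts.count a) a + p.parts.filter (· ≠ a) := by
    rw [← Multiset.filter_eq', Multiset.filter_add_not]
  have sum_eq (p : n.Partition) : p.parts.count a * a + (p.parts.filter (· ≠ a)).sum = n := by
    rw [← smul_eq_mul, ← Multiset.sum_replicate, ← Multiset.sum_add, ← parts_eq, p.parts_sum]
  have count_eq : p.parts.count a = q.parts.count a :=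
    Nat.eq_of_mul_eq_mul_right ha (by have := sum_eq p; have := sum_eq q; rw [h] at *; omega)
  exact Nat.Partition.ext (by rw [parts_eq p, parts_eq q, count_eq, h])

section PartitionBounds

open Finset Real

lemma card_partition_le_two_pow (n : ℕ) : Fintype.card n.Partition ≤ 2 ^ (n - 1) :=
  composition_card n ▸ Fintype.card_le_of_surjective _ Nat.Partition.ofComposition_surj

lemma count_one_add_sum_count_mul {n : ℕ} (p : n.Partition) :
    p.parts.count 1 + ∑ i ∈ Icc 2 n, p.parts.count i * i = n := by
  have hsub : p.parts.toFinset ⊆ insert 1 (Icc 2 n) := fun i hi => by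
    rw [Multiset.mem_toFinset] at hi
    have := p.parts_pos hi
    have := p.le_of_mem_parts hi
    simp only [mem_insert, mem_Icc]
    omega
  simpa [p.parts_sum] using (Finset.sum_multiset_count_of_subset p.parts _ hsub).symm

lemma injective_count_Icc_two {n : ℕ} :
    Function.Injective fun (p : n.Partition) (i : Icc 2 n) => p.parts.count (i : ℕ) :=
  fun p q h => partition_ext_of_filter_ne one_pos <| Multiset.ext' fun i => by
    by_cases hi : i ∈ Icc 2 n
    · have : i ≠ 1 := by have := (mem_Icc.1 hi).1; omega
      simpa [Multiset.count_filter, this] using congrFun h ⟨i, hi⟩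
    · have not_mem (p : n.Partition) : i ∉ p.parts.filter (· ≠ 1) := fun hip => hi <| by
        obtain ⟨hip, hi₁⟩ := Multiset.mem_filter.1 hip
        have := p.parts_pos hip
        exact mem_Icc.2 ⟨by omega, p.le_of_mem_parts hip⟩
      rw [Multiset.count_eq_zero_of_notMem (not_mem p),
        Multiset.count_eq_zero_of_notMem (not_mem q)]

/-- A partition is determined by the multiplicities of its parts other than `1`, so it contributes
its own term to the expansion of the product of geometric sums. -/
lemma card_partition_mul_pow_le_prod {x : ℝ} (hx₀ : 0 ≤ x) (hx₁ : x < 1) (n : ℕ) :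
    Fintype.card n.Partition * x ^ n ≤ ∏ i ∈ Icc 2 n, (1 - x ^ i)⁻¹ := by
  classical
  let mult (p : n.Partition) (i : Icc 2 n) : ℕ := p.parts.count (i : ℕ)
  have sum_mult_le (p : n.Partition) : ∑ i : Icc 2 n, mult p i * i ≤ n := by
    conv_rhs => rw [← count_one_add_sum_count_mul p, ← sum_coe_sort]
    exact Nat.le_add_left _ _
  have mult_mem (p : n.Partition) : mult p ∈ Fintype.piFinset fun _ => range (n + 1) :=
    Fintype.mem_piFinset.2 fun i => mem_range_succ_iff.2 <|
      calc mult p i ≤ mult p i * i := Nat.le_mul_of_pos_right _ (by grind)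
        _ ≤ ∑ i : Icc 2 n, mult p i * i :=
          single_le_sum (f := fun i : Icc 2 n => mult p i * i) (fun _ _ => Nat.zero_le _)
            (mem_univ i)
        _ ≤ n := sum_mult_le p
  have pow_le (p : n.Partition) : x ^ n ≤ ∏ i : Icc 2 n, (x ^ (i : ℕ)) ^ mult p i := by
    simp only [← pow_mul', prod_pow_eq_pow_sum]
    exact pow_le_pow_of_le_one hx₀ hx₁.le (sum_mult_le p)
  calc Fintype.card n.Partition * x ^ n
      ≤ ∑ p : n.Partition, ∏ i : Icc 2 n, (x ^ (i : ℕ)) ^ mult p i := by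
        simpa using card_nsmul_le_sum univ _ _ fun p _ => pow_le p
    _ = ∑ c ∈ univ.image mult, ∏ i : Icc 2 n, (x ^ (i : ℕ)) ^ c i := by
        rw [sum_image injective_count_Icc_two.injOn]
    _ ≤ ∑ c ∈ Fintype.piFinset fun _ => range (n + 1), ∏ i : Icc 2 n, (x ^ (i : ℕ)) ^ c i :=
        sum_le_sum_of_subset_of_nonneg (image_subset_iff.2 fun p _ => mult_mem p)
          fun c _ _ => by positivity
    _ = ∏ i : Icc 2 n, ∑ c ∈ range (n + 1), (x ^ (i : ℕ)) ^ c := (prod_univ_sum _ _).symm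
    _ ≤ ∏ i : Icc 2 n, (1 - x ^ (i : ℕ))⁻¹ := prod_le_prod (fun i _ => by positivity) fun i _ =>
        sum_le_hasSum _ (fun c _ => by positivity) <| hasSum_geometric_of_lt_one (by positivity)
          (pow_lt_one₀ hx₀ hx₁ (by grind))
    _ = ∏ i ∈ Icc 2 n, (1 - x ^ i)⁻¹ := prod_coe_sort _ fun i => (1 - x ^ i)⁻¹

lemma natCast_mul_pow_div_one_sub_pow_le {x : ℝ} (hx₀ : 0 ≤ x) (hx₁ : x < 1) {m : ℕ} (hm : m ≠ 0) :
    m * (x ^ m / (1 - x ^ m)) ≤ x / (1 - x) := by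
  obtain ⟨m, rfl⟩ := Nat.exists_eq_add_one_of_ne_zero hm
  have hpow : x ^ (m + 1) < 1 := pow_lt_one₀ hx₀ hx₁ hm
  have hgeom : (m + 1) * x ^ m ≤ ∑ i ∈ range (m + 1), x ^ i := by
    simpa using card_nsmul_le_sum (range (m + 1)) (x ^ ·) (x ^ m) fun i hi =>
      pow_le_pow_of_le_one hx₀ hx₁.le (mem_range_succ_iff.1 hi)
  rw [← mul_div_assoc, div_le_div_iff₀ (by linarith) (by linarith), ← mul_neg_geom_sum x (m + 1)]
  calc ((m + 1 : ℕ) * x ^ (m + 1)) * (1 - x) = x * ((1 - x) * ((m + 1) * x ^ m)) := by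
        push_cast; ring
    _ ≤ x * ((1 - x) * ∑ i ∈ range (m + 1), x ^ i) := by
        have := sub_pos.2 hx₁
        gcongr

lemma sum_pow_le_div_one_sub {y : ℝ} (hy₀ : 0 ≤ y) (hy₁ : y < 1) {s : Finset ℕ} (hs : 0 ∉ s) :
    ∑ i ∈ s, y ^ i ≤ y / (1 - y) := by
  have h := sum_le_hasSum (insert 0 s) (fun i _ => pow_nonneg hy₀ i)
    (hasSum_geometric_of_lt_one hy₀ hy₁)
  rw [sum_insert hs, pow_zero] at h
  have : (1 - y)⁻¹ = 1 + y / (1 - y) := by field_simp [(sub_pos.2 hy₁).ne']; ring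
  linarith

/-- Expanding the logarithm and summing over `i` first leaves `x / (1 - x) * ∑ 1 / m ^ 2`. -/
lemma prod_inv_one_sub_pow_le_exp {x : ℝ} (hx₀ : 0 ≤ x) (hx₁ : x < 1) {s : Finset ℕ}
    (hs : 0 ∉ s) :
    ∏ i ∈ s, (1 - x ^ i)⁻¹ ≤ exp (π ^ 2 / 6 * (x / (1 - x))) := by
  have hpow {i : ℕ} (hi : i ≠ 0) : x ^ i < 1 := pow_lt_one₀ hx₀ hx₁ hi
  have hi₀ {i : ℕ} (hi : i ∈ s) : i ≠ 0 := fun h => hs (h ▸ hi)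
  have hlog : HasSum (fun m : ℕ => ∑ i ∈ s, (x ^ i) ^ (m + 1) / (m + 1))
      (∑ i ∈ s, -log (1 - x ^ i)) := hasSum_sum fun i hi =>
    hasSum_pow_div_log_of_abs_lt_one (by rw [abs_of_nonneg (by positivity)]; exact hpow (hi₀ hi))
  have hzeta : HasSum (fun m : ℕ => 1 / ((m + 1 : ℕ) : ℝ) ^ 2 * (x / (1 - x)))
      (π ^ 2 / 6 * (x / (1 - x))) := by
    simpa using ((hasSum_nat_add_iff' 1).2 hasSum_zeta_two).mul_right (x / (1 - x))
  have hterm (m : ℕ) : ∑ i ∈ s, (x ^ i) ^ (m + 1) / (m + 1) ≤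
      1 / ((m + 1 : ℕ) : ℝ) ^ 2 * (x / (1 - x)) := by
    have hsum := sum_pow_le_div_one_sub (pow_nonneg hx₀ _) (hpow m.succ_ne_zero) hs
    have hmul := natCast_mul_pow_div_one_sub_pow_le hx₀ hx₁ m.succ_ne_zero
    simp only [pow_right_comm x _ (m + 1), ← sum_div]
    rw [one_div_mul_eq_div, div_le_div_iff₀ (by positivity) (by positivity)]
    push_cast at hmul ⊢
    have : (0:ℝ) < m + 1 := by positivity
    nlinarith
  calc ∏ i ∈ s, (1 - x ^ i)⁻¹ = exp (∑ i ∈ s, -log (1 - x ^ i)) := by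
        rw [exp_sum]
        exact prod_congr rfl fun i hi => by rw [exp_neg, exp_log (sub_pos.2 (hpow (hi₀ hi)))]
    _ ≤ exp (π ^ 2 / 6 * (x / (1 - x))) := exp_le_exp.2 (hasSum_le hterm hlog hzeta)

lemma add_one_mul_card_partition_le_exp {r : ℝ} (hr : 0 < r) {n : ℕ} :
    (r + 1) * Fintype.card n.Partition ≤ exp (π ^ 2 / 6 * r + n / r) := by
  set x := r / (r + 1) with hx
  have hx₀ : 0 < x := by positivity
  have hx₁ : x < 1 := (div_lt_one (by positivity)).2 (lt_add_one r)
  have hsub : 1 - x = (r + 1)⁻¹ := by rw [hx]; field_simp; ring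
  have hprod : (r + 1) * (Fintype.card n.Partition * x ^ n) ≤ exp (π ^ 2 / 6 * r) := by
    calc (r + 1) * (Fintype.card n.Partition * x ^ n)
        ≤ (r + 1) * ∏ i ∈ Icc 2 n, (1 - x ^ i)⁻¹ := by
          gcongr
          exact card_partition_mul_pow_le_prod hx₀.le hx₁ n
      _ = ∏ i ∈ insert 1 (Icc 2 n), (1 - x ^ i)⁻¹ := by
          rw [prod_insert (by simp), pow_one, hsub, inv_inv]
      _ ≤ exp (π ^ 2 / 6 * (x / (1 - x))) :=
          prod_inv_one_sub_pow_le_exp hx₀.le hx₁ (by simp)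
      _ = exp (π ^ 2 / 6 * r) := by
          rw [hsub, div_inv_eq_mul, div_mul_cancel₀ _ (by positivity)]
  have hpow : (x ^ n)⁻¹ ≤ exp (n / r) := by
    calc (x ^ n)⁻¹ = (1 / r + 1) ^ n := by rw [← inv_pow, hx]; congr 1; field_simp; ring
      _ ≤ exp (1 / r) ^ n := by gcongr; exact add_one_le_exp _
      _ = exp (n / r) := by rw [← exp_nat_mul, mul_one_div]
  calc (r + 1) * (Fintype.card n.Partition : ℝ)
      = (r + 1) * (Fintype.card n.Partition * x ^ n) * (x ^ n)⁻¹ := by field_simp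
    _ ≤ exp (π ^ 2 / 6 * r) * exp (n / r) := by gcongr
    _ = exp (π ^ 2 / 6 * r + n / r) := (exp_add _ _).symm

lemma exp_eleven_thirds_lt : exp (11 / 3) < 40 := by
  refine lt_of_pow_lt_pow_left₀ 3 (by norm_num) ?_
  calc exp (11 / 3) ^ 3 = exp 1 ^ 11 := by rw [← exp_nat_mul, ← exp_nat_mul]; norm_num
    _ < 2.72 ^ 11 := by gcongr; exact exp_one_lt_d9.trans (by norm_num)
    _ < 40 ^ 3 := by norm_num

lemma add_one_mul_card_partition_le_forty_pow {n m : ℕ} (hm : 0 < m) (hn : n ≤ 2 * m ^ 2) :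
    (m + 1) * Fintype.card n.Partition ≤ 40 ^ m := by
  have hm' : (0 : ℝ) < m := mod_cast hm
  have hexp : π ^ 2 / 6 * m + n / m ≤ m * (11 / 3) := by
    have hpi : π ^ 2 ≤ 10 := by nlinarith [pi_pos, pi_lt_d2]
    have hdiv : (n : ℝ) / m ≤ 2 * m := by
      rw [div_le_iff₀ hm']
      exact_mod_cast hn.trans_eq (by ring)
    nlinarith
  have hreal : ((m : ℝ) + 1) * Fintype.card n.Partition ≤ 40 ^ m :=
    calc ((m : ℝ) + 1) * Fintype.card n.Partition ≤ exp (π ^ 2 / 6 * m + n / m) :=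
          add_one_mul_card_partition_le_exp hm'
      _ ≤ exp (m * (11 / 3)) := exp_le_exp.2 hexp
      _ = exp (11 / 3) ^ m := exp_nat_mul _ m
      _ ≤ 40 ^ m := by gcongr; exact exp_eleven_thirds_lt.le
  exact_mod_cast hreal

end PartitionBounds

section RhoCount

lemma sum_map_le_of_superadditive {φ : ℕ → ℕ} (hφ : ∀ x y, φ x + φ y ≤ φ (x + y))
    {s t : Multiset ℕ} (hst : s ≤ t) : (s.map φ).sum ≤ φ t.sum := by
  obtain ⟨u, rfl⟩ := Multiset.le_iff_exists_add.1 hst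
  calc (s.map φ).sum ≤ φ s.sum :=
        Multiset.le_sum_of_subadditive (β := ℕᵒᵈ) φ (Nat.zero_le _) hφ _
    _ ≤ φ s.sum + φ u.sum := Nat.le_add_right _ _
    _ ≤ φ (s + u).sum := Multiset.sum_add s u ▸ hφ _ _

/-- The parts other than `a` are mapped by `φ` and the result is filled up with ones. -/
lemma rhoCount_le_card_partition {R : Set ℕ} {φ : ℕ → ℕ} {a : ℕ} (ha : 0 < a)
    (hφ : ∀ x y, φ x + φ y ≤ φ (x + y)) (hinj : Set.InjOn φ (R \ {a}))
    (htwo : ∀ x ∈ R \ {a}, 2 ≤ φ x) (n : ℕ) :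
    rhoCount R n ≤ Fintype.card (φ n).Partition := by
  let image (p : n.Partition) : Multiset ℕ := (p.parts.filter (· ≠ a)).map φ
  have mem_diff {p : n.Partition} (hp : ∀ x ∈ p.parts, x ∈ R) {x : ℕ}
      (hx : x ∈ p.parts.filter (· ≠ a)) : x ∈ R \ {a} :=
    ⟨hp x (Multiset.mem_of_mem_filter hx), (Multiset.mem_filter.1 hx).2⟩
  have two_le {p : n.Partition} (hp : ∀ x ∈ p.parts, x ∈ R) {y : ℕ} (hy : y ∈ image p) :
      2 ≤ y := by
    obtain ⟨x, hx, rfl⟩ := Multiset.mem_map.1 hy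
    exact htwo x (mem_diff hp hx)
  have sum_image_le (p : n.Partition) : (image p).sum ≤ φ n := by
    simpa only [p.parts_sum] using sum_map_le_of_superadditive hφ (p.parts.filter_le (· ≠ a))
  let toPartition (p : {p : n.Partition // ∀ x ∈ p.parts, x ∈ R}) : (φ n).Partition :=
    { parts := image p.1 + Multiset.replicate (φ n - (image p.1).sum) 1
      parts_pos := fun hx => by
        rcases Multiset.mem_add.1 hx with hx | hx
        · exact two_pos.trans_le (two_le p.2 hx)
        · exact (Multiset.eq_of_mem_replicate hx).symm ▸ one_pos
      parts_sum := by
        have := sum_image_le p.1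
        rw [Multiset.sum_add, Multiset.sum_replicate, smul_eq_mul]
        omega }
  have filter_toPartition (p) : (toPartition p).parts.filter (2 ≤ ·) = image p.1 := by
    rw [Multiset.filter_add, Multiset.filter_eq_self.2 fun y hy => two_le p.2 hy,
      Multiset.filter_eq_nil.2 fun y hy => by simp [Multiset.eq_of_mem_replicate hy]]
    exact add_zero _
  have invFunOn_image (p : {p : n.Partition // ∀ x ∈ p.parts, x ∈ R}) :
      (image p.1).map (Function.invFunOn φ (R \ {a})) = p.1.parts.filter (· ≠ a) := by
    rw [Multiset.map_map]
    exact (Multiset.map_congr rfl fun x hx => hinj.leftInvOn_invFunOn (mem_diff p.2 hx)).trans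
      (Multiset.map_id' _)
  have injective : Function.Injective toPartition := fun p q h => Subtype.ext <|
    partition_ext_of_filter_ne ha <| by
      rw [← invFunOn_image, ← invFunOn_image, ← filter_toPartition, h, filter_toPartition]
  exact (Nat.card_le_card_of_injective toPartition injective).trans_eq Nat.card_eq_fintype_card

end RhoCount

section CongMinusCount

variable {d a n : ℕ}

/-- The parts admitted by `congMinusCount`. -/
def congMinusParts (d a : ℕ) : Set ℕ :=
  {x | (x ≡ a [MOD d + 3] ∨ x + a ≡ 0 [MOD d + 3]) ∧ x ≠ d + 3 - a}

lemma congMinusCount_eq_rhoCount : congMinusCount d a n = rhoCount (congMinusParts d a) n :=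
  Nat.card_congr (Equiv.subtypeEquivRight fun _ => forall₂_and.symm)

lemma exists_of_mem_congMinusParts {x : ℕ} (ha : 0 < a) (had : a < d + 3)
    (hx : x ∈ congMinusParts d a) (hxa : x ≠ a) :
    ∃ j, 1 ≤ j ∧ (x = j * (d + 3) + a ∨ x + a = (j + 1) * (d + 3)) := by
  obtain ⟨hmod | hdvd, hne⟩ := hx
  · obtain ⟨j, hj⟩ : ∃ j, x = j * (d + 3) + a :=
      ⟨x / (d + 3), by conv_rhs => rw [← Nat.mod_eq_of_modEq hmod had, Nat.div_add_mod']⟩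
    exact ⟨j, Nat.one_le_iff_ne_zero.2 fun h => hxa (by simpa [h] using hj), .inl hj⟩
  · obtain ⟨_ | _ | j, hj⟩ := (Nat.modEq_zero_iff_dvd).1 hdvd
    · omega
    · omega
    · exact ⟨j + 1, by omega, .inr (by rw [hj]; ring)⟩

lemma exists_two_mul_div_of_mem_congMinusParts {x : ℕ} (ha : 0 < a) (had : 2 * a < d + 3)
    (hx : x ∈ congMinusParts d a \ {a}) :
    ∃ j, 1 ≤ j ∧ (x = j * (d + 3) + a ∧ 2 * x / (d + 3) = 2 * j ∨
      x + a = (j + 1) * (d + 3) ∧ 2 * x / (d + 3) = 2 * j + 1) := by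
  obtain ⟨j, hj, h | h⟩ := exists_of_mem_congMinusParts ha (by omega) hx.1 hx.2
  · exact ⟨j, hj, .inl ⟨h, Nat.div_eq_of_lt_le (by linarith) (by linarith)⟩⟩
  · exact ⟨j, hj, .inr ⟨h, Nat.div_eq_of_lt_le (by linarith) (by linarith)⟩⟩

lemma congMinusCount_le_card_partition (ha : 0 < a) (had : 2 * a < d + 3) :
    congMinusCount d a n ≤ Fintype.card (2 * n / (d + 3)).Partition := by
  rw [congMinusCount_eq_rhoCount]
  refine rhoCount_le_card_partition (φ := fun x => 2 * x / (d + 3)) ha (fun x y => ?_)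
    (fun x hx y hy hxy => ?_) (fun x hx => ?_) n
  · exact mul_add 2 x y ▸ Nat.div_add_div_le_add_div
  · obtain ⟨i, -, hi⟩ := exists_two_mul_div_of_mem_congMinusParts ha had hx
    obtain ⟨j, -, hj⟩ := exists_two_mul_div_of_mem_congMinusParts ha had hy
    have hxy : 2 * x / (d + 3) = 2 * y / (d + 3) := hxy
    obtain rfl : i = j := by omega
    omega
  · obtain ⟨j, hj, h⟩ := exists_two_mul_div_of_mem_congMinusParts ha had hx
    omega

lemma eq_or_le_of_mem_congMinusParts {x : ℕ} (ha : 0 < a) (had : 3 * a ≤ d + 3)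
    (hx : x ∈ congMinusParts d a) : x = a ∨ x = d + 3 + a ∨ d + 3 + 2 * a ≤ x := by
  refine or_iff_not_imp_left.2 fun hxa => ?_
  obtain ⟨_ | _ | j, hj, h | h⟩ := exists_of_mem_congMinusParts ha (by omega) hx hxa
  all_goals first | omega | exact .inr (by nlinarith)

lemma parts_eq_singleton_of_mem_ne (ha : 0 < a) (had : 3 * a ≤ d + 3) (hn : n < d + 3 + 2 * a)
    {p : n.Partition} (hp : ∀ x ∈ p.parts, x ∈ congMinusParts d a) {x : ℕ} (hx : x ∈ p.parts)
    (hxa : x ≠ a) : p.parts = {n} ∧ n = d + 3 + a := by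
  have hsum := p.parts_sum
  obtain ⟨s, hs⟩ := Multiset.exists_cons_of_mem hx
  rw [hs, Multiset.sum_cons] at hsum
  have hx' : x = d + 3 + a := by
    have := eq_or_le_of_mem_congMinusParts ha had (hp x hx)
    omega
  obtain rfl : s = 0 := Multiset.eq_zero_of_forall_notMem fun y hy => by
    have hys := Multiset.le_sum_of_mem hy
    have := eq_or_le_of_mem_congMinusParts ha had (hp y (hs ▸ Multiset.mem_cons_of_mem hy))
    omega
  rw [Multiset.sum_zero, add_zero] at hsum
  exact ⟨hsum ▸ hs, hsum ▸ hx'⟩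

lemma congMinusCount_le_one (ha : 0 < a) (had : 3 * a ≤ d + 3) (hn : n < d + 3 + 2 * a)
    (h : a ∣ d + 3 → n ≠ d + 3 + a) : congMinusCount d a n ≤ 1 := by
  have filter_ne_eq (p : n.Partition) (hp : ∀ x ∈ p.parts, x ∈ congMinusParts d a) :
      p.parts.filter (· ≠ a) = if a ∣ n then 0 else {n} := by
    split_ifs with hdvd
    · refine Multiset.filter_eq_nil.2 fun x hx hxa => ?_
      have hn' := (parts_eq_singleton_of_mem_ne ha had hn hp hx hxa).2
      exact h ((Nat.dvd_add_left dvd_rfl).1 (hn' ▸ hdvd)) hn'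
    · have hne : ∃ x ∈ p.parts, x ≠ a := by
        by_contra! hall
        exact hdvd (p.parts_sum ▸ Multiset.dvd_sum fun x hx => (hall x hx).symm.dvd)
      obtain ⟨x, hx, hxa⟩ := hne
      rw [(parts_eq_singleton_of_mem_ne ha had hn hp hx hxa).1,
        Multiset.filter_singleton, if_pos fun hna => hdvd hna.symm.dvd]
  rw [congMinusCount_eq_rhoCount]
  refine Finite.card_le_one_iff_subsingleton.2 ⟨fun p q => Subtype.ext ?_⟩
  exact partition_ext_of_filter_ne ha ((filter_ne_eq p p.2).trans (filter_ne_eq q q.2).symm)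

lemma congMinusCount_eq_zero (ha : 0 < a) (had : 3 * a ≤ d + 3) (hn₀ : n ≠ 0) (hna : n < a) :
    congMinusCount d a n = 0 := by
  rw [congMinusCount_eq_rhoCount]
  refine Nat.card_eq_zero.2 (.inl ⟨fun ⟨p, hp⟩ => ?_⟩)
  have hparts : p.parts ≠ 0 := fun h => hn₀ (by rw [← p.parts_sum, h, Multiset.sum_zero])
  obtain ⟨x, hx⟩ := Multiset.exists_mem_of_ne_zero hparts
  have := p.le_of_mem_parts hx
  have := eq_or_le_of_mem_congMinusParts ha had (hp x hx)
  omega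

end CongMinusCount

section GapCount

open Finset
open scoped Nat

variable {d a n : ℕ}

lemma card_le_gapCount (ha : 0 < a) (F : Finset (List ℕ))
    (hF : ∀ l ∈ F, (∀ x ∈ l, a ≤ x) ∧ l.IsChain (fun x y => x + d ≤ y) ∧ l.sum = n) :
    #F ≤ gapCount d a n := by
  have sort_eq {l : List ℕ} (hl : l ∈ F) : (l : Multiset ℕ).sort (· ≤ ·) = l := by
    have hle := (hF l hl).2.1.imp (S := (· ≤ ·)) fun x y h => by omega
    exact List.mergeSort_of_pairwise (by simpa using hle.pairwise)
  let toPartition (l : F) : {p : n.Partition // (∀ x ∈ p.parts, a ≤ x) ∧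
      List.IsChain (fun x y => x + d ≤ y) (p.parts.sort (· ≤ ·))} :=
    ⟨⟨l.1, fun hx => ha.trans_le ((hF l l.2).1 _ hx), (hF l l.2).2.2⟩, (hF l l.2).1,
      (sort_eq l.2).symm ▸ (hF l l.2).2.1⟩
  have injective : Function.Injective toPartition := fun l m h => Subtype.ext <| by
    rw [← sort_eq l.2, ← sort_eq m.2, show (l.1 : Multiset ℕ) = m.1 from congrArg (·.1.parts) h]
  calc #F = Nat.card F := by simp
    _ ≤ gapCount d a n := Nat.card_le_card_of_injective toPartition injective

lemma one_le_gapCount (ha : 0 < a) (h : a ≤ n) : 1 ≤ gapCount d a n :=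
  card_le_gapCount ha {[n]} (by simpa using h)

lemma two_le_gapCount (ha : 0 < a) (h : 2 * a + d ≤ n) : 2 ≤ gapCount d a n := by
  have hcard : #{[n], [a, n - a]} = 2 := card_pair (by simp)
  exact hcard ▸ card_le_gapCount ha _ (by simp; omega)

lemma card_piAntidiag_univ_fin (N k : ℕ) :
    #(univ.piAntidiag N : Finset (Fin (k + 1) → ℕ)) = (N + k).choose k := by
  have h := card_finsuppAntidiag_nat_eq_choose (s := (univ : Finset (Fin (k + 1)))) N
  rw [finsuppAntidiag, card_map, card_attach, card_fin] at h
  rw [h, ← Nat.choose_symm_add]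
  congr 1
  omega

/-- A solution of `x 0 + ⋯ + x k = N` is sorted and added to `a, a + d, …, a + k * d`; it can be
recovered from the result and the sorting permutation. -/
lemma choose_le_factorial_mul_gapCount (ha : 0 < a) (k N : ℕ) :
    (N + k).choose k ≤ (k + 1)! * gapCount d a (∑ i ∈ range (k + 1), (a + d * i) + N) := by
  let sortPerm (x : Fin (k + 1) → ℕ) : Equiv.Perm (Fin (k + 1)) := Tuple.sort x
  let gapList (x : Fin (k + 1) → ℕ) : List ℕ := List.ofFn fun i => a + d * i + x (sortPerm x i)
  have isChain_gapList (x : Fin (k + 1) → ℕ) : (gapList x).IsChain (fun b c => b + d ≤ c) :=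
    List.isChain_ofFn.2 fun i hi => by
      have : (⟨i, by omega⟩ : Fin (k + 1)) ≤ ⟨i + 1, hi⟩ := Nat.le_succ i
      have := Tuple.monotone_sort x this
      simp only [Function.comp_apply] at this
      simp only [mul_add, sortPerm]
      omega
  have sum_gapList {x : Fin (k + 1) → ℕ} (hx : ∑ i, x i = N) :
      (gapList x).sum = ∑ i ∈ range (k + 1), (a + d * i) + N := by
    rw [List.sum_ofFn, sum_add_distrib, Equiv.sum_comp (sortPerm x) x, hx,
      Fin.sum_univ_eq_sum_range (fun i => a + d * i)]
  have injective : Function.Injective fun x => (sortPerm x, gapList x) := fun x y h => by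
    obtain ⟨hperm, hlist⟩ := Prod.mk.inj h
    have hlist := List.ofFn_injective hlist
    rw [← hperm] at hlist
    ext i
    simpa using congrFun hlist ((sortPerm x).symm i)
  calc (N + k).choose k = #(univ.piAntidiag N : Finset (Fin (k + 1) → ℕ)) :=
        (card_piAntidiag_univ_fin N k).symm
    _ ≤ #((univ : Finset (Equiv.Perm (Fin (k + 1)))) ×ˢ (univ.piAntidiag N).image gapList) :=
        card_le_card_of_injOn _ (fun x hx => by simpa using ⟨x, by simpa using hx, rfl⟩)
          injective.injOn
    _ = (k + 1)! * #((univ.piAntidiag N).image gapList) := by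
        rw [card_product, card_univ, Fintype.card_perm, Fintype.card_fin]
    _ ≤ (k + 1)! * gapCount d a (∑ i ∈ range (k + 1), (a + d * i) + N) := by
        gcongr
        refine card_le_gapCount ha _ fun l hl => ?_
        obtain ⟨x, hx, rfl⟩ := mem_image.1 hl
        refine ⟨List.forall_mem_ofFn_iff.2 fun i => by omega, isChain_gapList x, sum_gapList ?_⟩
        simpa using hx

lemma le_gapCount {k N C : ℕ} (ha : 0 < a) (h : (k + 1) * (2 * a + d * k) + 2 * N ≤ 2 * n)
    (hC : (k + 1)! * k ! * C ≤ (N + 1) ^ k) : C ≤ gapCount d a n := by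
  have hsum : 2 * ∑ i ∈ range (k + 1), (a + d * i) = (k + 1) * (2 * a + d * k) :=
    calc 2 * ∑ i ∈ range (k + 1), (a + d * i)
        = 2 * ((k + 1) * a) + d * ((∑ i ∈ range (k + 1), i) * 2) := by
          rw [sum_add_distrib, ← mul_sum, sum_const, card_range, smul_eq_mul]
          ring
      _ = (k + 1) * (2 * a + d * k) := by
          rw [sum_range_id_mul_two, Nat.add_sub_cancel]
          ring
  obtain ⟨M, hM⟩ : ∃ M, n = ∑ i ∈ range (k + 1), (a + d * i) + (N + M) :=
    ⟨n - (∑ i ∈ range (k + 1), (a + d * i) + N), by omega⟩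
  refine Nat.le_of_mul_le_mul_left (hC.trans ?_) (by positivity : 0 < (k + 1)! * k !)
  calc (N + 1) ^ k ≤ (N + M + 1) ^ k := by gcongr; omega
    _ ≤ k ! * (N + M + k).choose k :=
        Nat.ascFactorial_eq_factorial_mul_choose _ _ ▸ Nat.pow_succ_le_ascFactorial _ _
    _ ≤ k ! * ((k + 1)! * gapCount d a n) := by
        gcongr
        exact hM ▸ choose_le_factorial_mul_gapCount ha k (N + M)
    _ = (k + 1)! * k ! * gapCount d a n := by ring

end GapCount

section Comparison

open scoped Nat

variable {d a n w : ℕ}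

/-- `j + 3` is the `k` of `le_gapCount`; the shift avoids the subtraction in `k * (k - 1) + 1`. -/
lemma factorial_mul_factorial_mul_forty_pow_le (j : ℕ) :
    (j + 4)! * (j + 3)! * 40 ^ (j + 4) ≤ (j + 5) * (60 * ((j + 3) * (j + 2) + 1)) ^ (j + 3) := by
  induction j with
  | zero => norm_num [Nat.factorial]
  | succ j ih =>
    have step : 40 * (j + 4) * (j + 5) ^ 2 ≤ 60 * ((j + 4) * (j + 3) + 1) * (j + 6) := by nlinarith
    calc (j + 5)! * (j + 4)! * 40 ^ (j + 5)
        = 40 * (j + 4) * (j + 5) * ((j + 4)! * (j + 3)! * 40 ^ (j + 4)) := by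
          rw [Nat.factorial_succ (j + 4), Nat.factorial_succ (j + 3)]; ring
      _ ≤ 40 * (j + 4) * (j + 5) * ((j + 5) * (60 * ((j + 3) * (j + 2) + 1)) ^ (j + 3)) := by gcongr
      _ = 40 * (j + 4) * (j + 5) ^ 2 * (60 * ((j + 3) * (j + 2) + 1)) ^ (j + 3) := by ring
      _ ≤ 60 * ((j + 4) * (j + 3) + 1) * (j + 6) * (60 * ((j + 4) * (j + 3) + 1)) ^ (j + 3) := by
          gcongr <;> omega
      _ = (j + 6) * (60 * ((j + 4) * (j + 3) + 1)) ^ (j + 4) := by ring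

lemma card_partition_le_gapCount_of_le (ha : 0 < a) (had : 16 * a ≤ d + 3) (hd : 121 ≤ d)
    (hn : 2 * a + d ≤ n) (hw : w * (d + 3) ≤ 2 * n) (hw' : w ≤ 18) :
    Fintype.card w.Partition ≤ gapCount d a n := by
  refine (card_partition_le_two_pow w).trans ?_
  rcases lt_or_ge w 3 with h | h
  · exact (Nat.pow_le_pow_right two_pos (by omega : w - 1 ≤ 1)).trans (two_le_gapCount ha hn)
  -- The bounds on `a` and `d` make the excess of `n` over the minimal sum of `k + 1` parts at
  -- least the number `N` chosen here.
  rcases lt_or_ge w 9 with h₁ | h₁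
  · refine le_gapCount (k := 1) (N := 62 * w - 137) ha ?_ ?_
    · interval_cases w <;> omega
    · interval_cases w <;> decide
  rcases lt_or_ge w 16 with h₂ | h₂
  · refine le_gapCount (k := 2) (N := 62 * w - 387) ha ?_ ?_
    · interval_cases w <;> omega
    · interval_cases w <;> decide
  · refine le_gapCount (k := 3) (N := 62 * w - 757) ha ?_ ?_
    · interval_cases w <;> omega
    · interval_cases w <;> decide

lemma card_partition_le_gapCount_of_ge (ha : 0 < a) (had : 16 * a ≤ d + 3) (hd : 121 ≤ d)
    (hw : w * (d + 3) ≤ 2 * n) (hw' : 19 ≤ w) :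
    Fintype.card w.Partition ≤ gapCount d a n := by
  obtain ⟨j, hj₁, hj₂⟩ : ∃ j, 2 * (j + 3) ^ 2 < w ∧ w ≤ 2 * (j + 4) ^ 2 := by
    have hk : 3 ≤ Nat.sqrt ((w - 1) / 2) := Nat.le_sqrt'.2 (by omega)
    obtain ⟨j, hj⟩ := Nat.exists_eq_add_of_le' hk
    have hle : (j + 3) ^ 2 ≤ (w - 1) / 2 := hj ▸ Nat.sqrt_le' _
    have hlt : (w - 1) / 2 < (j + 4) ^ 2 := by simpa [hj] using Nat.lt_succ_sqrt' ((w - 1) / 2)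
    exact ⟨j, by omega, by omega⟩
  refine le_gapCount (k := j + 3) (N := 60 * ((j + 3) * (j + 2)) + 59) ha ?_ ?_
  · have : (2 * (j + 3) ^ 2 + 1) * (d + 3) ≤ 2 * n := (Nat.mul_le_mul_right _ hj₁).trans hw
    nlinarith [Nat.mul_le_mul_left (j + 4) had, Nat.mul_le_mul_left (8 * j ^ 2 + 39 * j + 52) hd]
  · refine Nat.le_of_mul_le_mul_left ?_ (by positivity : 0 < j + 5)
    calc (j + 5) * ((j + 4)! * (j + 3)! * Fintype.card w.Partition)
        = (j + 4)! * (j + 3)! * ((j + 4 + 1) * Fintype.card w.Partition) := by ring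
      _ ≤ (j + 4)! * (j + 3)! * 40 ^ (j + 4) := by
          gcongr; exact add_one_mul_card_partition_le_forty_pow (by omega) hj₂
      _ ≤ _ := factorial_mul_factorial_mul_forty_pow_le j

lemma card_partition_le_gapCount (ha : 0 < a) (had : 16 * a ≤ d + 3) (hd : 121 ≤ d)
    (hn : 2 * a + d ≤ n) (hw : w * (d + 3) ≤ 2 * n) :
    Fintype.card w.Partition ≤ gapCount d a n :=
  (le_or_gt w 18).elim (card_partition_le_gapCount_of_le ha had hd hn hw)
    (card_partition_le_gapCount_of_ge ha had hd hw)

end Comparison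

lemma mul_cdiv_eq_add_negRes {d a : ℕ} (ha : 0 < a) : a * cdiv d a = d + negRes d a := by
  have hdiv := Nat.div_add_mod' d a
  have hlt := Nat.mod_lt d ha
  rw [mul_comm]
  rcases Nat.eq_zero_or_pos (d % a) with h | h
  · have hcdiv : cdiv d a = d / a :=
      Nat.div_eq_of_lt_le (by omega) (by rw [add_one_mul]; omega)
    rw [hcdiv, negRes, h, Nat.sub_zero, Nat.mod_self]
    omega
  · have hcdiv : cdiv d a = d / a + 1 :=
      Nat.div_eq_of_lt_le (by rw [add_one_mul]; omega) (by rw [add_one_mul, add_one_mul]; omega)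
    rw [hcdiv, negRes, Nat.mod_eq_of_lt (by omega), add_one_mul]
    omega

theorem stmt1_general {a d n : ℕ} (ha : 0 < a) (had : 16 * a ≤ d + 3) (hd : 121 ≤ d) (hn : 1 ≤ n)
    (h : a ∣ d + 3 → n ≠ d + 3 + a) : congMinusCount d a n ≤ gapCount d a n := by
  rcases lt_or_ge n a with hna | han
  · rw [congMinusCount_eq_zero ha (by omega) (by omega) hna]
    exact Nat.zero_le _
  rcases lt_or_ge n (2 * a + d) with hn₂ | hn₂
  · exact (congMinusCount_le_one ha (by omega) (by omega) h).trans (one_le_gapCount ha han)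
  · exact (congMinusCount_le_card_partition ha (by omega)).trans
      (card_partition_le_gapCount ha had hd hn₂ (Nat.div_mul_le_self _ _))

theorem stmt1 (a d : ℕ) (ha : 4 ≤ a) (hd : 1 ≤ d)
    (hceil : cdiv d a = 31 ∨ 63 ≤ cdiv d a) (hres : negRes d a ≤ 3) :
    (¬ a ∣ d + 3 → ∀ n, 1 ≤ n → congMinusCount d a n ≤ gapCount d a n) ∧
    (a ∣ d + 3 → ∀ n, 1 ≤ n → n ≠ d + 3 + a →
      congMinusCount d a n ≤ gapCount d a n) := by
  have had : 31 * a ≤ d + 3 := by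
    nlinarith [mul_cdiv_eq_add_negRes (d := d) (by omega : 0 < a), (by omega : 31 ≤ cdiv d a)]
  exact ⟨fun h n hn => stmt1_general (by omega) (by omega) (by omega) hn (absurd · h),
    fun _ n hn hne => stmt1_general (by omega) (by omega) (by omega) hn fun _ => hne⟩
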